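/- Let c and d be natural numbers and let X be the 2×2 integer matrix with rows (−1, −c) and (d, c·d − 1). If X³ is the identity matrix, then c = 1 and d = 1. -/

import Mathlib

/-!
A `2 × 2` matrix `M` of determinant `1` and trace `t` satisfies `M ^ 2 = t • M - 1` by
Cayley–Hamilton, hence `M ^ 3 - 1 = (t + 1) • ((t - 1) • M - 1)`. The matrix in question has
determinant `1` and trace `c * d - 2`. If its cube is `1`, the vanishing of the right-hand side in
the first row says, with `p = c * d`, that `(p - 1) * (p - 2) = 0` and
`c * (p - 1) * (p - 3) = 0`; eliminating between the two leaves `2 * (p - 1) = 0`.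
-/

section CommRing

variable {R : Type*} [CommRing R]

theorem matrix_fin_two_sq_eq_trace_smul_sub_det_smul (M : Matrix (Fin 2) (Fin 2) R) :
    M ^ 2 = M.trace • M - M.det • 1 := by
  nontriviality R
  have cayley_hamilton := M.aeval_self_charpoly
  simp only [Matrix.charpoly_fin_two, map_add, map_sub, map_mul, map_pow, Polynomial.aeval_X,
    Polynomial.aeval_C, Algebra.algebraMap_eq_smul_one, smul_one_mul] at cayley_hamilton
  rwa [sub_add, sub_eq_zero] at cayley_hamilton

theorem matrix_fin_two_pow_three_sub_one_of_det_eq_one {M : Matrix (Fin 2) (Fin 2) R}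
    (hM : M.det = 1) :
    M ^ 3 - 1 = (M.trace + 1) • ((M.trace - 1) • M - 1) := by
  have sq_eq : M ^ 2 = M.trace • M - 1 := by
    rw [matrix_fin_two_sq_eq_trace_smul_sub_det_smul, hM, one_smul]
  calc
    M ^ 3 - 1 = M.trace • M ^ 2 - M - 1 := by
      rw [pow_succ, sq_eq, sub_mul, smul_mul_assoc, ← sq, sq_eq, one_mul]
    _ = (M.trace + 1) • ((M.trace - 1) • M - 1) := by
      rw [sq_eq]
      module

theorem stmt_5_general (c d : R) (h : !![-1, -c; d, c * d - 1] ^ 3 = 1) :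
    2 * (c * d) = 2 := by
  have det_eq : !![-1, -c; d, c * d - 1].det = 1 := by
    rw [Matrix.det_fin_two_of]
    ring
  have trace_eq : !![-1, -c; d, c * d - 1].trace = c * d - 2 := by
    rw [Matrix.trace_fin_two_of]
    ring
  have factored := matrix_fin_two_pow_three_sub_one_of_det_eq_one det_eq
  rw [h, sub_self, trace_eq] at factored
  have entry₀₀ : (c * d - 1) * (c * d - 2) = 0 := by
    have : 0 = (c * d - 2 + 1) * ((c * d - 2 - 1) * -1 - 1) := congr_fun₂ factored 0 0
    linear_combination this
  have entry₀₁ : c * (c * d - 1) * (c * d - 3) = 0 := by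
    have : 0 = (c * d - 2 + 1) * ((c * d - 2 - 1) * -c - 0) := congr_fun₂ factored 0 1
    linear_combination this
  linear_combination (c * d - 1) * entry₀₀ - d * entry₀₁

end CommRing

/-- If the 2×2 integer matrix `X = !![-1, -c; d, c*d - 1]` (with `c d : ℕ`) satisfies
`X ^ 3 = 1`, then `c = 1` and `d = 1`. -/
theorem stmt_5 (c d : ℕ)
    (h : (!![(-1 : ℤ), -(c : ℤ); (d : ℤ), (c : ℤ) * (d : ℤ) - 1]) ^ 3 = 1) :
    c = 1 ∧ d = 1 := by
  have two_mul_eq : 2 * (c * d) = 2 := mod_cast stmt_5_general (c : ℤ) d h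
  have mul_eq : c * d = 1 := by lia
  exact mul_eq_one.mp mul_eq
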